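/- arXiv:2112.14291 — 2 statements merged into one kernel-verified Lean document; each statement's English description precedes it below -/
import Mathlib

section
/- Let F be an n×k real matrix with C = F·Fᵀ, let k ≤ n, and let F̄ := [F | 0] be the n×n matrix obtained from F by appending n−k zero columns (so C = F̄·F̄ᵀ). Then: (i) for every DFact-feasible tuple (Θ, υ, ν, π, τ) for (C, s, A, b; F) there exists an n×n symmetric positive definite Θ̄ such that (Θ̄, υ, ν, π, τ) is DFact-feasible for (C, s, A, b; F̄) with equal objective value; and (ii) for every DFact-feasible tuple (Θ̄, υ, ν, π, τ) for (C, s, A, b; F̄) there exists a k×k symmetric positive definite Θ such that (Θ, υ, ν, π, τ) is DFact-feasible for (C, s, A, b; F) with objective value at most that of (Θ̄, υ, ν, π, τ). Consequently the factorization bound with factor F̄ equals the factorization bound with factor F. -/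
open Matrix

/-- The eigenvalues of a real symmetric matrix, sorted in nonincreasing order:
`sortedEigs M 0` is the largest eigenvalue (`λ_1`) and `sortedEigs M (k-1)` the
smallest (`λ_k`).  For non-Hermitian matrices we return the junk value `0`. -/
noncomputable def sortedEigs {k : ℕ} (M : Matrix (Fin k) (Fin k) ℝ) : Fin k → ℝ :=
  if h : M.IsHermitian then fun i => (h.eigenvalues ∘ Tuple.sort h.eigenvalues) i.rev
  else fun _ => 0

/-- DFact-feasibility of the tuple `(Θ, υ, ν, π, τ)` for the data `(A; F)`:
`Θ ≻ 0`, `υ, ν, π ≥ 0` and `diag(FΘFᵀ) + υ − ν − Aᵀπ − τ𝟙 = 0`. -/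
def DFactFeasible {n m k : ℕ} (A : Matrix (Fin m) (Fin n) ℝ) (F : Matrix (Fin n) (Fin k) ℝ)
    (Θ : Matrix (Fin k) (Fin k) ℝ) (υ ν : Fin n → ℝ) (π : Fin m → ℝ) (τ : ℝ) : Prop :=
  Θ.PosDef ∧ (∀ j, 0 ≤ υ j) ∧ (∀ j, 0 ≤ ν j) ∧ (∀ i, 0 ≤ π i) ∧
    ∀ j, (F * Θ * Fᵀ) j j + υ j - ν j - (∑ i, A i j * π i) - τ = 0

/-- The DFact objective value
`f(Θ, ν, π, τ) = −Σ_{ℓ=k−s+1}^{k} log λ_ℓ(Θ) + νᵀ𝟙 + πᵀb + τ·s − s`. -/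
noncomputable def DFactObj {n m k : ℕ} (s : ℕ) (b : Fin m → ℝ)
    (Θ : Matrix (Fin k) (Fin k) ℝ) (ν : Fin n → ℝ) (π : Fin m → ℝ) (τ : ℝ) : ℝ :=
  -(∑ i : Fin k, if k - s ≤ (i : ℕ) then Real.log (sortedEigs Θ i) else 0)
    + (∑ j, ν j) + (∑ i, π i * b i) + τ * s - s


/-- `F̄ = [F | 0]`: the `n×n` matrix obtained from an `n×k` matrix `F` (with `k ≤ n`)
by appending `n − k` zero columns. -/
def padCols {n k : ℕ} (F : Matrix (Fin n) (Fin k) ℝ) : Matrix (Fin n) (Fin n) ℝ :=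
  Matrix.of fun i j => if h : (j : ℕ) < k then F i ⟨(j : ℕ), h⟩ else 0

/-- The eigenvalues of a Hermitian matrix in nondecreasing order. -/
noncomputable def ascendingEigs {k : ℕ} {M : Matrix (Fin k) (Fin k) ℝ} (h : M.IsHermitian) :
    Fin k → ℝ :=
  h.eigenvalues ∘ Tuple.sort h.eigenvalues

lemma ascendingEigs_monotone {k : ℕ} {M : Matrix (Fin k) (Fin k) ℝ} (h : M.IsHermitian) :
    Monotone (ascendingEigs h) :=
  Tuple.monotone_sort _

lemma map_ascendingEigs {k : ℕ} {M : Matrix (Fin k) (Fin k) ℝ} (h : M.IsHermitian) :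
    Finset.univ.val.map (ascendingEigs h) = M.charpoly.roots := by
  rw [h.roots_charpoly_eq_eigenvalues, ascendingEigs, ← Multiset.map_map]
  exact congrArg _ (Multiset.map_univ_val_equiv (Tuple.sort h.eigenvalues))

lemma Monotone.eq_of_map_univ_eq {k : ℕ} {f g : Fin k → ℝ} (hf : Monotone f) (hg : Monotone g)
    (h : Finset.univ.val.map f = Finset.univ.val.map g) : f = g := by
  rw [Fin.univ_val_map, Fin.univ_val_map, Multiset.coe_eq_coe] at h
  exact List.ofFn_injective (h.eq_of_sortedLE hf.sortedLE_ofFn hg.sortedLE_ofFn)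

lemma ascendingEigs_pos {k : ℕ} {M : Matrix (Fin k) (Fin k) ℝ} (h : M.PosDef) (i : Fin k) :
    0 < ascendingEigs h.isHermitian i :=
  h.eigenvalues_pos _

lemma sum_log_sortedEigs {k s : ℕ} (hsk : s ≤ k) {M : Matrix (Fin k) (Fin k) ℝ}
    (h : M.IsHermitian) :
    (∑ i : Fin k, if k - s ≤ (i : ℕ) then Real.log (sortedEigs M i) else 0) =
      ∑ i : Fin s, Real.log (ascendingEigs h (Fin.castLE hsk i)) := by
  rw [← Equiv.sum_comp Fin.revPerm]
  have key : ∀ i : Fin k, (if k - s ≤ ((Fin.revPerm i : Fin k) : ℕ) then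
      Real.log (sortedEigs M (Fin.revPerm i)) else 0) =
      if (i : ℕ) < s then Real.log (ascendingEigs h i) else 0 := by
    intro i
    have hi := i.2
    have hlt : k - s ≤ (i.rev : ℕ) ↔ (i : ℕ) < s := by
      rw [Fin.val_rev]; omega
    simp only [hlt, sortedEigs, dif_pos h, ascendingEigs, Fin.revPerm_apply, Fin.rev_rev]
  rw [Finset.sum_congr rfl fun i _ => key i]
  obtain ⟨d, rfl⟩ := Nat.exists_eq_add_of_le hsk
  rw [Fin.sum_univ_add]
  simp [Fin.castAdd]

/-- Orthonormal coordinates diagonalizing the quadratic form of a Hermitian matrix. -/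
lemma exists_diagonalizing_coordinates {k : ℕ} {M : Matrix (Fin k) (Fin k) ℝ}
    (h : M.IsHermitian) :
    ∃ L : (Fin k → ℝ) →ₗ[ℝ] (Fin k → ℝ), ∀ y,
      y ⬝ᵥ M *ᵥ y = ∑ j, ascendingEigs h j * L y j ^ 2 ∧ y ⬝ᵥ y = ∑ j, L y j ^ 2 := by
  let U : Matrix (Fin k) (Fin k) ℝ := (h.eigenvectorUnitary).val
  let σ := Tuple.sort h.eigenvalues
  have hUU : U * Uᵀ = 1 := by
    simpa [star_eq_conjTranspose] using Unitary.coe_mul_star_self h.eigenvectorUnitary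
  have hM : M = U * diagonal h.eigenvalues * Uᵀ := by
    simpa [Unitary.conjStarAlgAut_apply, star_eq_conjTranspose, Function.comp_def]
      using h.spectral_theorem
  refine ⟨LinearMap.funLeft ℝ ℝ σ ∘ₗ Uᵀ.mulVecLin, fun y => ⟨?_, ?_⟩⟩
  · have : y ⬝ᵥ M *ᵥ y = ∑ j, h.eigenvalues j * (Uᵀ *ᵥ y) j ^ 2 := by
      conv_lhs => rw [hM]
      rw [← mulVec_mulVec, ← mulVec_mulVec, dotProduct_mulVec, ← mulVec_transpose]
      simp only [dotProduct, mulVec_diagonal]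
      exact Finset.sum_congr rfl fun j _ => by ring
    rw [this, ← Equiv.sum_comp σ]
    rfl
  · have : y ⬝ᵥ y = ∑ j, (Uᵀ *ᵥ y) j ^ 2 := by
      have h1 : y ⬝ᵥ (U * Uᵀ) *ᵥ y = (Uᵀ *ᵥ y) ⬝ᵥ (Uᵀ *ᵥ y) := by
        rw [← mulVec_mulVec, dotProduct_mulVec, ← mulVec_transpose]
      rw [hUU, one_mulVec] at h1
      rw [h1]
      simp only [dotProduct, sq]
    rw [this, ← Equiv.sum_comp σ]
    rfl

/-- Cauchy interlacing: compressing a symmetric matrix by orthonormal rows does not decrease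
the `i`-th smallest eigenvalue. -/
lemma ascendingEigs_le_compression {n k : ℕ} (hkn : k ≤ n) {M : Matrix (Fin n) (Fin n) ℝ}
    (hM : M.IsHermitian) (J : Matrix (Fin k) (Fin n) ℝ) (hJ : J * Jᵀ = 1)
    (hN : (J * M * Jᵀ).IsHermitian) (i : Fin k) :
    ascendingEigs hM (Fin.castLE hkn i) ≤ ascendingEigs hN i := by
  obtain ⟨L, hL⟩ := exists_diagonalizing_coordinates hM
  obtain ⟨K, hK⟩ := exists_diagonalizing_coordinates hN
  obtain ⟨k, rfl⟩ : ∃ k', k = k' + 1 := ⟨k - 1, by have := i.2; omega⟩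
  let T : (Fin (k + 1) → ℝ) →ₗ[ℝ] (Fin k → ℝ) := LinearMap.pi fun r =>
    if (r : ℕ) < i then
      LinearMap.proj (Fin.castLE hkn r.castSucc) ∘ₗ L ∘ₗ Jᵀ.mulVecLin
    else LinearMap.proj r.succ ∘ₗ K
  obtain ⟨y, hyT, hy⟩ := (Submodule.ne_bot_iff _).1
    (LinearMap.ker_ne_bot_of_finrank_lt (f := T) (by simp))
  have hT : ∀ r, T y r = 0 := fun r => congrFun hyT r
  have hlow : ∀ j : Fin n, (j : ℕ) < i → L (Jᵀ *ᵥ y) j = 0 := by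
    intro j hj
    have := hT ⟨j, by have := i.2; omega⟩
    simpa [T, hj, mulVec_transpose] using this
  have hhigh : ∀ j : Fin (k + 1), i < j → K y j = 0 := by
    intro j hj
    obtain ⟨r, rfl⟩ := Fin.exists_succ_eq.2 (Fin.ne_zero_of_lt hj)
    have h1 : ¬ (r : ℕ) < i := by
      have := Fin.lt_def.1 hj
      simp at this
      omega
    simpa [T, h1] using hT r
  have hform : y ⬝ᵥ (J * M * Jᵀ) *ᵥ y = (Jᵀ *ᵥ y) ⬝ᵥ M *ᵥ (Jᵀ *ᵥ y) := by
    rw [← mulVec_mulVec, ← mulVec_mulVec, dotProduct_mulVec, ← mulVec_transpose]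
  have hnorm : y ⬝ᵥ y = (Jᵀ *ᵥ y) ⬝ᵥ (Jᵀ *ᵥ y) := by
    conv_rhs => rw [mulVec_transpose, ← dotProduct_mulVec, ← mulVec_transpose, mulVec_mulVec, hJ,
      one_mulVec]
  have hypos : 0 < y ⬝ᵥ y := by
    simpa using dotProduct_star_self_pos_iff.2 hy
  have hlower : ascendingEigs hM (Fin.castLE hkn i) * (y ⬝ᵥ y) ≤ y ⬝ᵥ (J * M * Jᵀ) *ᵥ y := by
    rw [hform, hnorm, (hL _).1, (hL _).2, Finset.mul_sum]
    refine Finset.sum_le_sum fun j _ => ?_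
    by_cases hj : (j : ℕ) < i
    · simp [hlow j hj]
    · exact mul_le_mul_of_nonneg_right
        (ascendingEigs_monotone hM (Fin.le_def.2 (by simpa using hj))) (sq_nonneg _)
  have hupper : y ⬝ᵥ (J * M * Jᵀ) *ᵥ y ≤ ascendingEigs hN i * (y ⬝ᵥ y) := by
    rw [(hK _).1, (hK _).2, Finset.mul_sum]
    refine Finset.sum_le_sum fun j _ => ?_
    by_cases hj : i < j
    · simp [hhigh j hj]
    · exact mul_le_mul_of_nonneg_right (ascendingEigs_monotone hN (not_lt.1 hj)) (sq_nonneg _)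
  exact le_of_mul_le_mul_right (hlower.trans hupper) hypos

/-- The block diagonal matrix with blocks `Θ` and `μ • 1`. -/
def padScalar {k : ℕ} (d : ℕ) (Θ : Matrix (Fin k) (Fin k) ℝ) (μ : ℝ) :
    Matrix (Fin (k + d)) (Fin (k + d)) ℝ :=
  reindex finSumFinEquiv finSumFinEquiv (fromBlocks Θ 0 0 (diagonal fun _ => μ))

lemma isHermitian_padScalar {k : ℕ} (d : ℕ) {Θ : Matrix (Fin k) (Fin k) ℝ} (h : Θ.IsHermitian)
    (μ : ℝ) : (padScalar d Θ μ).IsHermitian :=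
  (IsHermitian.fromBlocks h (by simp) (isHermitian_diagonal _)).submatrix _

lemma ascendingEigs_padScalar {k : ℕ} (d : ℕ) {Θ : Matrix (Fin k) (Fin k) ℝ} (h : Θ.IsHermitian)
    {μ : ℝ} (hμ : ∀ i, ascendingEigs h i ≤ μ) :
    ascendingEigs (isHermitian_padScalar d h μ) = Fin.append (ascendingEigs h) fun _ => μ := by
  refine (ascendingEigs_monotone _).eq_of_map_univ_eq ?_ ?_
  · intro i j hij
    induction i using Fin.addCases with
    | left i =>
      induction j using Fin.addCases with
      | left j =>
        have hij' : i ≤ j := by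
          simp only [Fin.le_def, Fin.val_castAdd] at hij ⊢
          exact hij
        simpa using ascendingEigs_monotone h hij'
      | right j => simpa using hμ i
    | right i =>
      induction j using Fin.addCases with
      | left j =>
        have := j.2
        simp only [Fin.le_def, Fin.val_natAdd, Fin.val_castAdd] at hij
        omega
      | right j => simp
  · rw [map_ascendingEigs, padScalar, charpoly_reindex, charpoly_fromBlocks_zero₁₂,
      Polynomial.roots_mul ((charpoly_monic _).mul (charpoly_monic _)).ne_zero,
      ← map_ascendingEigs h, charpoly_diagonal, Fin.univ_val_map, Fin.univ_val_map,
      List.ofFn_fin_append, ← Multiset.coe_add]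
    congr 1
    simp [Polynomial.roots_pow, Multiset.nsmul_singleton, ← Multiset.coe_replicate]

lemma posDef_padScalar {k : ℕ} (d : ℕ) {Θ : Matrix (Fin k) (Fin k) ℝ} (h : Θ.PosDef)
    {μ : ℝ} (hμ : 0 < μ) (hle : ∀ i, ascendingEigs h.isHermitian i ≤ μ) :
    (padScalar d Θ μ).PosDef := by
  have hpad := isHermitian_padScalar d h.isHermitian μ
  have hpos : ∀ i, 0 < ascendingEigs hpad i := by
    rw [ascendingEigs_padScalar d h.isHermitian hle]
    intro i
    induction i using Fin.addCases with
    | left i => simpa using ascendingEigs_pos h i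
    | right i => simpa using hμ
  refine hpad.posDef_iff_eigenvalues_pos.2 fun i => ?_
  simpa [ascendingEigs] using hpos ((Tuple.sort hpad.eigenvalues).symm i)

/-- The coordinate projection onto the first `k` coordinates. -/
def truncation {n k : ℕ} (hkn : k ≤ n) : Matrix (Fin k) (Fin n) ℝ :=
  (1 : Matrix (Fin n) (Fin n) ℝ).submatrix (Fin.castLE hkn) id

lemma truncation_mul_transpose {n k : ℕ} (hkn : k ≤ n) :
    truncation hkn * (truncation hkn)ᵀ = 1 := by
  ext i j
  simp [truncation, Matrix.mul_apply, Matrix.one_apply]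

lemma padCols_eq_mul_truncation {n k : ℕ} (hkn : k ≤ n) (F : Matrix (Fin n) (Fin k) ℝ) :
    padCols F = F * truncation hkn := by
  ext i j
  simp only [padCols, truncation, of_apply, Matrix.mul_apply, submatrix_apply, id, Matrix.one_apply,
    mul_ite, mul_one, mul_zero]
  split_ifs with hj
  · rw [Finset.sum_eq_single ⟨j, hj⟩]
    · simp
    · intro b _ hb
      rw [if_neg]
      rintro rfl
      exact hb rfl
    · simp
  · refine (Finset.sum_eq_zero fun b _ => if_neg ?_).symm
    rintro rfl
    exact hj b.2

lemma truncation_mul_mul_transpose {n k : ℕ} (hkn : k ≤ n) (M : Matrix (Fin n) (Fin n) ℝ) :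
    truncation hkn * M * (truncation hkn)ᵀ =
      M.submatrix (Fin.castLE hkn) (Fin.castLE hkn) := by
  ext i j
  simp [truncation, Matrix.mul_apply, Matrix.one_apply]

lemma truncation_mul_padScalar {k : ℕ} (d : ℕ) (Θ : Matrix (Fin k) (Fin k) ℝ) (μ : ℝ) :
    truncation (Nat.le_add_right k d) * padScalar d Θ μ *
      (truncation (Nat.le_add_right k d))ᵀ = Θ := by
  rw [truncation_mul_mul_transpose]
  ext i j
  change fromBlocks Θ 0 0 _ (finSumFinEquiv.symm (Fin.castAdd d i))
    (finSumFinEquiv.symm (Fin.castAdd d j)) = _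
  simp

lemma padCols_mul_mul_transpose {n k : ℕ} (hkn : k ≤ n) (F : Matrix (Fin n) (Fin k) ℝ)
    (M : Matrix (Fin n) (Fin n) ℝ) :
    padCols F * M * (padCols F)ᵀ = F * (truncation hkn * M * (truncation hkn)ᵀ) * Fᵀ := by
  simp only [padCols_eq_mul_truncation hkn, transpose_mul, Matrix.mul_assoc]

lemma posDef_truncation {n k : ℕ} (hkn : k ≤ n) {M : Matrix (Fin n) (Fin n) ℝ} (hM : M.PosDef) :
    (truncation hkn * M * (truncation hkn)ᵀ).PosDef := by
  refine conjTranspose_eq_transpose_of_trivial (truncation hkn) ▸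
    hM.mul_mul_conjTranspose_same ?_
  intro x y hxy
  have := congrArg (fun v => v ᵥ* (truncation hkn)ᵀ) hxy
  simpa [vecMul_vecMul, truncation_mul_transpose] using this

lemma exists_padded_feasible {n m s k : ℕ} (hsk : s ≤ k) (hkn : k ≤ n)
    {F : Matrix (Fin n) (Fin k) ℝ} {A : Matrix (Fin m) (Fin n) ℝ} (b : Fin m → ℝ)
    {Θ : Matrix (Fin k) (Fin k) ℝ} {υ ν : Fin n → ℝ} {π : Fin m → ℝ} {τ : ℝ}
    (h : DFactFeasible A F Θ υ ν π τ) :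
    ∃ Θbar : Matrix (Fin n) (Fin n) ℝ, DFactFeasible A (padCols F) Θbar υ ν π τ ∧
      DFactObj s b Θbar ν π τ = DFactObj s b Θ ν π τ := by
  obtain ⟨d, rfl⟩ := Nat.exists_eq_add_of_le hkn
  obtain ⟨hΘ, hυ, hν, hπ, heq⟩ := h
  obtain ⟨μ, hμ⟩ := (Set.finite_range (ascendingEigs hΘ.isHermitian)).bddAbove
  have hμ' : ∀ i, ascendingEigs hΘ.isHermitian i ≤ max μ 1 := fun i =>
    (hμ ⟨i, rfl⟩).trans (le_max_left _ _)
  refine ⟨padScalar d Θ (max μ 1),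
    ⟨posDef_padScalar d hΘ (lt_max_of_lt_right one_pos) hμ', hυ, hν, hπ, ?_⟩, ?_⟩
  · rwa [padCols_mul_mul_transpose hkn, truncation_mul_padScalar]
  · simp only [DFactObj]
    rw [sum_log_sortedEigs hsk hΘ.isHermitian, sum_log_sortedEigs (hsk.trans hkn)
      (isHermitian_padScalar d hΘ.isHermitian (max μ 1)), ascendingEigs_padScalar d _ hμ']
    congr 5
    refine Finset.sum_congr rfl fun i _ => ?_
    rw [show Fin.castLE (hsk.trans hkn) i = Fin.castAdd d (Fin.castLE hsk i) from rfl,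
      Fin.append_left]

lemma exists_truncated_feasible {n m s k : ℕ} (hsk : s ≤ k) (hkn : k ≤ n)
    {F : Matrix (Fin n) (Fin k) ℝ} {A : Matrix (Fin m) (Fin n) ℝ} (b : Fin m → ℝ)
    {Θbar : Matrix (Fin n) (Fin n) ℝ} {υ ν : Fin n → ℝ} {π : Fin m → ℝ} {τ : ℝ}
    (h : DFactFeasible A (padCols F) Θbar υ ν π τ) :
    ∃ Θ : Matrix (Fin k) (Fin k) ℝ, DFactFeasible A F Θ υ ν π τ ∧
      DFactObj s b Θ ν π τ ≤ DFactObj s b Θbar ν π τ := by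
  obtain ⟨hΘ, hυ, hν, hπ, heq⟩ := h
  have hpos := posDef_truncation hkn hΘ
  refine ⟨truncation hkn * Θbar * (truncation hkn)ᵀ, ⟨hpos, hυ, hν, hπ, ?_⟩, ?_⟩
  · rwa [padCols_mul_mul_transpose hkn] at heq
  · simp only [DFactObj]
    rw [sum_log_sortedEigs hsk hpos.isHermitian, sum_log_sortedEigs (hsk.trans hkn) hΘ.isHermitian]
    gcongr with i
    · exact ascendingEigs_pos hΘ _
    · exact ascendingEigs_le_compression hkn hΘ.isHermitian _ (truncation_mul_transpose hkn)
        hpos.isHermitian (Fin.castLE hsk i)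

theorem stmt_13 {n m s k : ℕ} (hn : 0 < n) (hm : 0 < m) (hs : 0 < s)
    (hsk : s ≤ k) (hkn : k ≤ n)
    (C : Matrix (Fin n) (Fin n) ℝ) (hC : C.PosSemidef)
    (F : Matrix (Fin n) (Fin k) ℝ) (hCF : C = F * Fᵀ)
    (A : Matrix (Fin m) (Fin n) ℝ) (b : Fin m → ℝ) :
    -- (i): padding a feasible solution, preserving the objective value
    (∀ (Θ : Matrix (Fin k) (Fin k) ℝ) (υ ν : Fin n → ℝ) (π : Fin m → ℝ) (τ : ℝ),
        DFactFeasible A F Θ υ ν π τ →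
          ∃ Θbar : Matrix (Fin n) (Fin n) ℝ,
            DFactFeasible A (padCols F) Θbar υ ν π τ ∧
            DFactObj s b Θbar ν π τ = DFactObj s b Θ ν π τ) ∧
    -- (ii): truncating a feasible solution, not increasing the objective value
    (∀ (Θbar : Matrix (Fin n) (Fin n) ℝ) (υ ν : Fin n → ℝ) (π : Fin m → ℝ) (τ : ℝ),
        DFactFeasible A (padCols F) Θbar υ ν π τ →
          ∃ Θ : Matrix (Fin k) (Fin k) ℝ,
            DFactFeasible A F Θ υ ν π τ ∧
            DFactObj s b Θ ν π τ ≤ DFactObj s b Θbar ν π τ) ∧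
    -- consequently, the factorization bounds for F̄ and F coincide
    sInf {z : ℝ | ∃ (Θbar : Matrix (Fin n) (Fin n) ℝ) (υ ν : Fin n → ℝ) (π : Fin m → ℝ) (τ : ℝ),
        DFactFeasible A (padCols F) Θbar υ ν π τ ∧ z = DFactObj s b Θbar ν π τ} =
      sInf {z : ℝ | ∃ (Θ : Matrix (Fin k) (Fin k) ℝ) (υ ν : Fin n → ℝ) (π : Fin m → ℝ) (τ : ℝ),
        DFactFeasible A F Θ υ ν π τ ∧ z = DFactObj s b Θ ν π τ} := by
  refine ⟨fun Θ υ ν π τ h => exists_padded_feasible hsk hkn b h,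
    fun Θbar υ ν π τ h => exists_truncated_feasible hsk hkn b h,
    csInf_eq_csInf_of_forall_exists_le ?_ ?_⟩
  · rintro _ ⟨Θbar, υ, ν, π, τ, h, rfl⟩
    obtain ⟨Θ, hΘ, hle⟩ := exists_truncated_feasible (s := s) hsk hkn b h
    exact ⟨_, ⟨Θ, υ, ν, π, τ, hΘ, rfl⟩, hle⟩
  · rintro _ ⟨Θ, υ, ν, π, τ, h, rfl⟩
    obtain ⟨Θbar, hΘbar, heq⟩ := exists_padded_feasible (s := s) hsk hkn b h
    exact ⟨_, ⟨Θbar, υ, ν, π, τ, hΘbar, rfl⟩, heq.le⟩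
end

section
/- Let k ≥ 2, let 1 ≤ s < k, and let Θ̂ be a k×k real symmetric positive definite matrix with λ_{k−s}(Θ̂) > λ_{k−s+1}(Θ̂), and let Θ̂ = Σ_{ℓ=1}^{k} λ_ℓ(Θ̂)·u_ℓ·u_ℓᵀ be a spectral decomposition with orthonormal eigenvectors u_1, …, u_k. Then for every k×k real symmetric matrix H, the real function t ↦ −Σ_{ℓ=k−s+1}^{k} log λ_ℓ(Θ̂ + t·H) is differentiable at t = 0 with derivative −Σ_{ℓ=k−s+1}^{k} (u_ℓᵀ·H·u_ℓ)/λ_ℓ(Θ̂); that is, the gradient of Θ ↦ −Σ_{ℓ=k−s+1}^{k} log λ_ℓ(Θ) at Θ̂ is −Σ_{ℓ=k−s+1}^{k} λ_ℓ(Θ̂)⁻¹·u_ℓ·u_ℓᵀ. -/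
open Matrix

theorem sortedEigs_antitone {k : ℕ} (M : Matrix (Fin k) (Fin k) ℝ) : Antitone (sortedEigs M) := by
  unfold sortedEigs
  split_ifs with h
  · intro i j hij
    exact Tuple.monotone_sort h.eigenvalues (Fin.rev_le_rev.mpr hij)
  · exact antitone_const

/-- A real symmetric matrix is diagonalised by an orthogonal matrix whose rows are ordered
compatibly with `sortedEigs`. -/
theorem exists_orthogonal_mul_eq_diagonal_sortedEigs_mul {k : ℕ} {M : Matrix (Fin k) (Fin k) ℝ}
    (hM : M.IsHermitian) :
    ∃ V : Matrix (Fin k) (Fin k) ℝ, V * Vᵀ = 1 ∧ V * M = diagonal (sortedEigs M) * V := by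
  let σ : Fin k → Fin k := fun i => Tuple.sort hM.eigenvalues i.rev
  have hσ : Function.Injective σ := (Tuple.sort hM.eigenvalues).injective.comp Fin.rev_injective
  have hMT : ∀ i j, M i j = M j i := fun i j => (hM.apply i j).symm
  refine ⟨of fun i j => hM.eigenvectorBasis (σ i) j, ?_, ?_⟩
  · ext i j
    have := orthonormal_iff_ite.mp hM.eigenvectorBasis.orthonormal (σ j) (σ i)
    simp only [PiLp.inner_apply, RCLike.inner_apply, conj_trivial, hσ.eq_iff] at this
    simp only [mul_apply, transpose_apply, of_apply, one_apply, this, eq_comm]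
  · ext i j
    have := congrFun (hM.mulVec_eigenvectorBasis (σ i)) j
    rw [diagonal_mul]
    simp only [sortedEigs, hM, dif_pos, Function.comp_apply, of_apply]
    rw [mul_apply]
    refine Eq.trans (Finset.sum_congr rfl fun l _ => ?_) this
    rw [of_apply, hMT l j, mul_comm]

theorem sum_sq_eq_trace_mul_transpose {n : Type*} [Fintype n] (A : Matrix n n ℝ) :
    ∑ j, ∑ i, A j i ^ 2 = (A * Aᵀ).trace := by
  simp [trace, mul_apply, sq]

section TwoFrames

variable {n : Type*} [Fintype n] [DecidableEq n] {U V M N : Matrix n n ℝ} {μ ν : n → ℝ}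

theorem sum_sq_row_mul_transpose_eq_one (hU : U * Uᵀ = 1) (hV : V * Vᵀ = 1) (j : n) :
    ∑ i, (V * Uᵀ) j i ^ 2 = 1 := by
  have h : (V * Uᵀ) * (V * Uᵀ)ᵀ = 1 := by
    rw [transpose_mul, transpose_transpose, Matrix.mul_assoc, ← Matrix.mul_assoc Uᵀ,
      mul_eq_one_comm.mp hU, Matrix.one_mul, hV]
  have hjj := congrFun (congrFun h j) j
  rw [mul_apply, one_apply_eq] at hjj
  simpa only [transpose_apply, ← sq] using hjj

theorem sum_sq_col_mul_transpose_eq_one (hU : U * Uᵀ = 1) (hV : V * Vᵀ = 1) (i : n) :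
    ∑ j, (V * Uᵀ) j i ^ 2 = 1 := by
  have h : ∀ j, (V * Uᵀ) j i = (U * Vᵀ) i j := fun j => by
    simp [mul_apply, mul_comm]
  simp only [h, sum_sq_row_mul_transpose_eq_one hV hU]

theorem eigenvalue_sub_mul_overlap (hU : U * Uᵀ = 1) (hN : U * N = diagonal ν * U)
    (hM : V * M = diagonal μ * V) (j i : n) :
    (μ j - ν i) * (V * Uᵀ) j i = (V * (M - N) * Uᵀ) j i := by
  have hN' : N * Uᵀ = Uᵀ * diagonal ν := by
    calc N * Uᵀ = Uᵀ * (U * N) * Uᵀ := by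
          rw [← Matrix.mul_assoc, mul_eq_one_comm.mp hU, Matrix.one_mul]
      _ = Uᵀ * diagonal ν := by
          rw [hN, Matrix.mul_assoc, Matrix.mul_assoc, hU, Matrix.mul_one]
  rw [Matrix.mul_sub, Matrix.sub_mul, hM, Matrix.mul_assoc V N, hN', ← Matrix.mul_assoc,
    Matrix.mul_assoc, Matrix.sub_apply, diagonal_mul, mul_diagonal]
  ring

theorem trace_conj_mul_transpose (hU : U * Uᵀ = 1) (hV : V * Vᵀ = 1) (A : Matrix n n ℝ) :
    ((V * A * Uᵀ) * (V * A * Uᵀ)ᵀ).trace = (A * Aᵀ).trace := by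
  have h : (V * A * Uᵀ) * (V * A * Uᵀ)ᵀ = V * (A * Aᵀ * Vᵀ) := by
    simp only [transpose_mul, transpose_transpose, Matrix.mul_assoc]
    rw [← Matrix.mul_assoc Uᵀ, mul_eq_one_comm.mp hU, Matrix.one_mul]
  rw [h, trace_mul_comm, Matrix.mul_assoc, mul_eq_one_comm.mp hV, Matrix.mul_one]

theorem sum_sq_overlap_mul_sq_eigenvalue_sub (hU : U * Uᵀ = 1) (hV : V * Vᵀ = 1)
    (hN : U * N = diagonal ν * U) (hM : V * M = diagonal μ * V) :
    ∑ j, ∑ i, (V * Uᵀ) j i ^ 2 * (μ j - ν i) ^ 2 = ((M - N) * (M - N)ᵀ).trace := by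
  rw [← trace_conj_mul_transpose hU hV, ← sum_sq_eq_trace_mul_transpose]
  refine Finset.sum_congr rfl fun j _ => Finset.sum_congr rfl fun i _ => ?_
  rw [← eigenvalue_sub_mul_overlap hU hN hM]
  ring

theorem sum_sq_overlap_mul_remainder (hU : U * Uᵀ = 1) (hV : V * Vᵀ = 1)
    (hN : U * N = diagonal ν * U) (hM : V * M = diagonal μ * V) (f g c : n → ℝ) :
    ∑ j, ∑ i, (V * Uᵀ) j i ^ 2 * (f j - g i - c i * (μ j - ν i)) =
      ∑ j, f j - ∑ i, g i - ∑ i, c i * (U * (M - N) * Uᵀ) i i := by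
  have h₁ : ∑ j, ∑ i, (V * Uᵀ) j i ^ 2 * f j = ∑ j, f j := by
    simp [← Finset.sum_mul, sum_sq_row_mul_transpose_eq_one hU hV]
  have h₂ : ∑ j, ∑ i, (V * Uᵀ) j i ^ 2 * g i = ∑ i, g i := by
    rw [Finset.sum_comm]
    simp [← Finset.sum_mul, sum_sq_col_mul_transpose_eq_one hU hV]
  have h₃ : ∑ j, ∑ i, (V * Uᵀ) j i ^ 2 * (c i * (μ j - ν i)) =
      ∑ i, c i * (U * (M - N) * Uᵀ) i i := by
    have h : U * (M - N) * Uᵀ = (V * Uᵀ)ᵀ * (V * (M - N) * Uᵀ) := by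
      simp only [transpose_mul, transpose_transpose, Matrix.mul_assoc]
      rw [← Matrix.mul_assoc Vᵀ, mul_eq_one_comm.mp hV, Matrix.one_mul]
    rw [Finset.sum_comm, h]
    refine Finset.sum_congr rfl fun i _ => ?_
    rw [mul_apply (M := (V * Uᵀ)ᵀ), Finset.mul_sum]
    refine Finset.sum_congr rfl fun j _ => ?_
    rw [← eigenvalue_sub_mul_overlap hU hN hM, transpose_apply]
    ring
  rw [← h₁, ← h₂, ← h₃]
  simp only [← Finset.sum_sub_distrib, ← mul_sub]

end TwoFrames

/-- One half of Weyl's perturbation inequality, with the Frobenius norm. -/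
theorem eigenvalue_lt_add_of_trace_lt {k : ℕ} {U V M N : Matrix (Fin k) (Fin k) ℝ}
    {μ ν : Fin k → ℝ} (hU : U * Uᵀ = 1) (hV : V * Vᵀ = 1)
    (hN : U * N = diagonal ν * U) (hM : V * M = diagonal μ * V) (hμ : Antitone μ)
    (hν : Antitone ν) {ε : ℝ} (hε : 0 < ε) (h : ((M - N) * (M - N)ᵀ).trace < ε ^ 2) (m : Fin k) :
    μ m < ν m + ε := by
  by_contra! hm
  set B := V * Uᵀ with hB
  have h_count : 1 ≤ ∑ j ∈ Finset.Iic m, ∑ i ∈ Finset.Ici m, B j i ^ 2 := by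
    have h_total : ∑ j, ∑ i ∈ Finset.Ici m, B j i ^ 2 = k - m := by
      rw [Finset.sum_comm]
      simp [hB, sum_sq_col_mul_transpose_eq_one hU hV, Nat.cast_sub m.2.le]
    have h_split : ∑ j, ∑ i ∈ Finset.Ici m, B j i ^ 2 =
        ∑ j ∈ Finset.Iic m, ∑ i ∈ Finset.Ici m, B j i ^ 2 +
          ∑ j ∈ Finset.Ioi m, ∑ i ∈ Finset.Ici m, B j i ^ 2 := by
      rw [← Finset.sum_union]
      · congr 1
        ext j
        simp [le_or_gt]
      · rw [Finset.disjoint_left]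
        intro j
        simp
    have h_rest : ∑ j ∈ Finset.Ioi m, ∑ i ∈ Finset.Ici m, B j i ^ 2 ≤ k - 1 - m := by
      calc _ ≤ ∑ j ∈ Finset.Ioi m, (1 : ℝ) := by
            refine Finset.sum_le_sum fun j _ => ?_
            rw [← sum_sq_row_mul_transpose_eq_one hU hV j]
            exact Finset.sum_le_sum_of_subset_of_nonneg (Finset.subset_univ _)
              fun _ _ _ => sq_nonneg _
        _ = k - 1 - m := by
            have h1 : 1 ≤ k := by have := m.2; omega
            have h2 : (m : ℕ) ≤ k - 1 := by have := m.2; omega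
            simp [Nat.cast_sub h2, Nat.cast_sub h1]
    linarith
  have h_bound : ∑ j ∈ Finset.Iic m, ∑ i ∈ Finset.Ici m, B j i ^ 2 * ε ^ 2 ≤
      ((M - N) * (M - N)ᵀ).trace := by
    rw [← sum_sq_overlap_mul_sq_eigenvalue_sub hU hV hN hM]
    calc _ ≤ ∑ j ∈ Finset.Iic m, ∑ i ∈ Finset.Ici m, B j i ^ 2 * (μ j - ν i) ^ 2 := by
          refine Finset.sum_le_sum fun j hj => Finset.sum_le_sum fun i hi => ?_
          have h1 := hμ (Finset.mem_Iic.mp hj)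
          have h2 := hν (Finset.mem_Ici.mp hi)
          have h3 : ε ≤ μ j - ν i := by linarith
          gcongr
      _ ≤ ∑ j ∈ Finset.Iic m, ∑ i, B j i ^ 2 * (μ j - ν i) ^ 2 :=
          Finset.sum_le_sum fun j _ => Finset.sum_le_sum_of_subset_of_nonneg
            (Finset.subset_univ _) fun _ _ _ => by positivity
      _ ≤ _ := Finset.sum_le_sum_of_subset_of_nonneg
            (Finset.subset_univ _) fun _ _ _ => Finset.sum_nonneg fun _ _ => by positivity
  simp only [← Finset.sum_mul] at h_bound
  nlinarith [sq_nonneg ε]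

theorem abs_log_sub_log_sub_le {a x y : ℝ} (ha : 0 < a) (hx : a ≤ x) (hy : a ≤ y) :
    |Real.log x - Real.log y - (x - y) / y| ≤ (x - y) ^ 2 / a ^ 2 := by
  have hx0 : 0 < x := ha.trans_le hx
  have hy0 : 0 < y := ha.trans_le hy
  have h1 := Real.log_le_sub_one_of_pos (div_pos hx0 hy0)
  have h2 := Real.one_sub_inv_le_log_of_pos (div_pos hx0 hy0)
  rw [Real.log_div hx0.ne' hy0.ne'] at h1 h2
  have h3 : (x - y) / y = x / y - 1 := by field_simp
  have h4 : x / y - 1 - (1 - (x / y)⁻¹) = (x - y) ^ 2 / (x * y) := by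
    field_simp
  have h5 : (x - y) ^ 2 / (x * y) ≤ (x - y) ^ 2 / a ^ 2 := by
    rw [sq a]
    gcongr
  rw [abs_le]
  constructor <;> linarith [div_nonneg (sq_nonneg (x - y)) (sq_nonneg a)]

theorem abs_log_le_add_inv {a b x : ℝ} (ha : 0 < a) (hax : a ≤ x) (hxb : x ≤ b) :
    |Real.log x| ≤ b + a⁻¹ := by
  have hx : 0 < x := ha.trans_le hax
  have h1 := Real.log_le_sub_one_of_pos hx
  have h2 := Real.one_sub_inv_le_log_of_pos hx
  have h3 : x⁻¹ ≤ a⁻¹ := by gcongr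
  have h4 : 0 < a⁻¹ := inv_pos.mpr ha
  rw [abs_le]
  constructor <;> linarith

theorem hasDerivAt_zero_of_abs_sub_le_sq {f : ℝ → ℝ} {f' C : ℝ}
    (h : ∀ᶠ t in nhds 0, |f t - f 0 - t * f'| ≤ C * t ^ 2) : HasDerivAt f f' 0 := by
  rw [hasDerivAt_iff_isLittleO]
  have h1 : (fun t : ℝ => f t - f 0 - (t - 0) • f') =O[nhds 0] fun t : ℝ => t ^ 2 := by
    refine Asymptotics.IsBigO.of_bound C ?_
    filter_upwards [h] with t ht
    simpa using ht
  refine h1.trans_isLittleO ?_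
  simpa using Asymptotics.isLittleO_pow_id (𝕜 := ℝ) one_lt_two

/-- Quadratic control of the first-order remainder of `log` on the lower cluster and of `0` on the
upper cluster, uniformly over pairs of points in the same or in different clusters. -/
theorem abs_ite_log_remainder_le {p q : Prop} [Decidable p] [Decidable q] {a b δ x y : ℝ}
    (ha : 0 < a) (hδ : 0 < δ) (hx : a ≤ x) (hy : a ≤ y) (hxb : p → x ≤ b) (hyb : q → y ≤ b)
    (hpq : p → ¬q → δ ≤ y - x) (hqp : q → ¬p → δ ≤ x - y) :
    |(if p then Real.log x else 0) - (if q then Real.log y else 0) -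
        (if q then 1 / y else 0) * (x - y)| ≤
      (1 / a ^ 2 + |b + a⁻¹| / δ ^ 2 + 1 / (δ * a)) * (x - y) ^ 2 := by
  have hK : 0 ≤ |b + a⁻¹| := abs_nonneg _
  have hA : 0 ≤ 1 / a ^ 2 * (x - y) ^ 2 := by positivity
  have hB : 0 ≤ |b + a⁻¹| / δ ^ 2 * (x - y) ^ 2 := by positivity
  have hD : 0 ≤ 1 / (δ * a) * (x - y) ^ 2 := by positivity
  have hfar : ∀ d : ℝ, δ ≤ d → |b + a⁻¹| ≤ |b + a⁻¹| / δ ^ 2 * d ^ 2 := fun d hd => by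
    rw [div_mul_eq_mul_div, le_div_iff₀ (by positivity)]
    gcongr
  rw [add_mul, add_mul]
  by_cases hp : p <;> by_cases hq : q <;> simp only [hp, hq, if_true, if_false]
  · have := abs_log_sub_log_sub_le ha hx hy
    rw [← one_div_mul_eq_div y, ← one_div_mul_eq_div (a ^ 2)] at this
    linarith
  · have h1 := (abs_log_le_add_inv ha hx (hxb hp)).trans (le_abs_self _)
    have h2 := hfar _ (hpq hp hq)
    rw [sub_zero, zero_mul, sub_zero]
    rw [← neg_sub x y, neg_sq] at h2
    linarith
  · have h1 := (abs_log_le_add_inv ha hy (hyb hq)).trans (le_abs_self _)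
    have h2 := hfar _ (hqp hq hp)
    have hd := hqp hq hp
    have hd0 : 0 < x - y := hδ.trans_le hd
    have h3 : 1 / y * (x - y) ≤ 1 / (δ * a) * (x - y) ^ 2 := by
      calc 1 / y * (x - y) ≤ 1 / a * (x - y) := by gcongr
        _ = 1 / (δ * a) * (δ * (x - y)) := by field_simp
        _ ≤ 1 / (δ * a) * ((x - y) * (x - y)) := by gcongr
        _ = _ := by ring
    have h4 : 0 ≤ 1 / y * (x - y) := mul_nonneg (by have := ha.trans_le hy; positivity) hd0.le
    rw [abs_le] at h1 ⊢
    constructor <;> linarith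
  · simp only [sub_zero, zero_mul, abs_zero]
    linarith

/-- Derivative of `Θ ↦ −Σ_{ℓ=k−s+1}^{k} log λ_ℓ(Θ)` at a symmetric positive definite `Θ̂`
with `λ_{k−s}(Θ̂) > λ_{k−s+1}(Θ̂)`, along a symmetric direction `H`, expressed via a
spectral decomposition `Θ̂ = Σ_ℓ λ_ℓ(Θ̂)·u_ℓ·u_ℓᵀ` with orthonormal `u_ℓ`. -/
theorem stmt_15 {k s : ℕ} (hk : 2 ≤ k) (hs : 1 ≤ s) (hsk : s < k)
    (Θ : Matrix (Fin k) (Fin k) ℝ) (hΘ : Θ.PosDef)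
    (hgap : sortedEigs Θ ⟨k - s, by omega⟩ < sortedEigs Θ ⟨k - s - 1, by omega⟩)
    (u : Fin k → Fin k → ℝ)
    (horth : ∀ i j, dotProduct (u i) (u j) = if i = j then (1 : ℝ) else 0)
    (hdecomp : Θ = ∑ ℓ : Fin k, sortedEigs Θ ℓ • Matrix.vecMulVec (u ℓ) (u ℓ))
    (H : Matrix (Fin k) (Fin k) ℝ) (hH : H.IsSymm) :
    HasDerivAt
      (fun t : ℝ =>
        -(∑ ℓ : Fin k, if k - s ≤ (ℓ : ℕ) then Real.log (sortedEigs (Θ + t • H) ℓ) else 0))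
      (-(∑ ℓ : Fin k,
          if k - s ≤ (ℓ : ℕ) then dotProduct (u ℓ) (H.mulVec (u ℓ)) / sortedEigs Θ ℓ else 0))
      0 := by
  have hsymm : ∀ t : ℝ, (Θ + t • H).IsHermitian := fun t => by
    have h1 : Θᵀ = Θ := by
      simpa [IsHermitian, conjTranspose_eq_transpose_of_trivial] using hΘ.isHermitian
    simp [IsHermitian, conjTranspose_eq_transpose_of_trivial, h1, hH.eq]
  set ν := sortedEigs Θ with hν_def
  have hν : Antitone ν := sortedEigs_antitone Θ
  set U : Matrix (Fin k) (Fin k) ℝ := of u with hU_def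
  have hU : U * Uᵀ = 1 := by
    ext i j
    simpa [mul_apply, one_apply, dotProduct, hU_def] using horth i j
  have hUΘ : U * Θ = diagonal ν * U := by
    have h : Θ = Uᵀ * diagonal ν * U := by
      conv_lhs => rw [hdecomp]
      ext i j
      rw [Matrix.sum_apply, mul_apply]
      refine Finset.sum_congr rfl fun l _ => ?_
      rw [mul_diagonal]
      simp [vecMulVec_apply, hU_def]
      ring
    conv_lhs => rw [h]
    rw [← Matrix.mul_assoc, ← Matrix.mul_assoc, hU, Matrix.one_mul]
  have hνpos : ∀ i, 0 < ν i := fun i => by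
    have h1 : (U * Θ * Uᵀ) i i = ν i := by
      rw [hUΘ, Matrix.mul_assoc, hU, Matrix.mul_one, diagonal_apply_eq]
    have h2 : u i ≠ 0 := fun h0 => by simpa [h0] using horth i i
    have h3 := hΘ.dotProduct_mulVec_pos h2
    rw [← h1, Matrix.mul_assoc]
    simpa [hU_def, mul_apply, dotProduct, mulVec] using h3
  set last : Fin k := ⟨k - 1, by omega⟩ with hlast
  set lo : Fin k := ⟨k - s, by omega⟩
  set hi : Fin k := ⟨k - s - 1, by omega⟩ with hhi
  obtain ⟨a, ha_def⟩ : ∃ a, a = ν last / 2 := ⟨_, rfl⟩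
  obtain ⟨δ, hδ_def⟩ : ∃ δ, δ = (ν hi - ν lo) / 2 := ⟨_, rfl⟩
  have ha : 0 < a := by linarith [hνpos last]
  have hδ : 0 < δ := by linarith
  obtain ⟨ε, hε_def⟩ : ∃ ε, ε = min a δ := ⟨_, rfl⟩
  have hε : 0 < ε := hε_def ▸ lt_min ha hδ
  have hεa : ε ≤ a := hε_def ▸ min_le_left _ _
  have hεδ : ε ≤ δ := hε_def ▸ min_le_right _ _
  have hle_last : ∀ i : Fin k, i ≤ last := fun i => by
    rw [Fin.le_def]; simp only [hlast]; omega
  have hlo_le : ∀ i : Fin k, k - s ≤ (i : ℕ) → lo ≤ i := fun i h => h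
  have hle_hi : ∀ i : Fin k, ¬k - s ≤ (i : ℕ) → i ≤ hi := fun i h => by
    rw [Fin.le_def]; simp only [hhi]; omega
  set C := 1 / a ^ 2 + |(ν lo + ε) + a⁻¹| / δ ^ 2 + 1 / (δ * a)
  have hsmall : ∀ᶠ t : ℝ in nhds 0, t ^ 2 * (H * Hᵀ).trace < ε ^ 2 := by
    have hc : Continuous fun t : ℝ => t ^ 2 * (H * Hᵀ).trace := by fun_prop
    exact hc.continuousAt.eventually_lt continuousAt_const (by simpa using pow_pos hε 2)
  have key : HasDerivAt
      (fun t : ℝ => ∑ ℓ : Fin k,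
        if k - s ≤ (ℓ : ℕ) then Real.log (sortedEigs (Θ + t • H) ℓ) else 0)
      (∑ ℓ : Fin k, if k - s ≤ (ℓ : ℕ) then dotProduct (u ℓ) (H.mulVec (u ℓ)) / ν ℓ else 0)
      0 := by
    refine hasDerivAt_zero_of_abs_sub_le_sq (C := C * (H * Hᵀ).trace) ?_
    filter_upwards [hsmall] with t ht
    obtain ⟨V, hV, hVM⟩ := exists_orthogonal_mul_eq_diagonal_sortedEigs_mul (hsymm t)
    set μ := sortedEigs (Θ + t • H)
    have hμ : Antitone μ := sortedEigs_antitone _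
    have htr : ((Θ + t • H - Θ) * (Θ + t • H - Θ)ᵀ).trace = t ^ 2 * (H * Hᵀ).trace := by
      simp [sq, mul_assoc]
    have htr' : ((Θ - (Θ + t • H)) * (Θ - (Θ + t • H))ᵀ).trace = t ^ 2 * (H * Hᵀ).trace := by
      simp [sq, mul_assoc]
    have hup := eigenvalue_lt_add_of_trace_lt hU hV hUΘ hVM hμ hν hε (htr ▸ ht)
    have hdown := eigenvalue_lt_add_of_trace_lt hV hU hVM hUΘ hν hμ hε (htr' ▸ ht)
    have hid := sum_sq_overlap_mul_remainder hU hV hUΘ hVM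
      (fun j => if k - s ≤ (j : ℕ) then Real.log (μ j) else 0)
      (fun i => if k - s ≤ (i : ℕ) then Real.log (ν i) else 0)
      (fun i => if k - s ≤ (i : ℕ) then 1 / ν i else 0)
    have hlin : ∑ i : Fin k, (if k - s ≤ (i : ℕ) then 1 / ν i else 0) *
          (U * (Θ + t • H - Θ) * Uᵀ) i i =
        t * ∑ ℓ : Fin k,
          if k - s ≤ (ℓ : ℕ) then dotProduct (u ℓ) (H.mulVec (u ℓ)) / ν ℓ else 0 := by
      rw [Finset.mul_sum]
      refine Finset.sum_congr rfl fun i _ => ?_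
      have h : (U * (Θ + t • H - Θ) * Uᵀ) i i = t * dotProduct (u i) (H.mulVec (u i)) := by
        rw [add_sub_cancel_left, Matrix.mul_smul, Matrix.smul_mul, Matrix.smul_apply, smul_eq_mul,
          Matrix.mul_assoc]
        simp [hU_def, mul_apply, dotProduct, mulVec]
      rw [h]
      split_ifs
      · ring
      · simp
    rw [hlin] at hid
    simp only [zero_smul, add_zero, ← hν_def]
    rw [← hid]
    calc _ ≤ ∑ j, ∑ i, (V * Uᵀ) j i ^ 2 * (C * (μ j - ν i) ^ 2) := by
          refine (Finset.abs_sum_le_sum_abs _ _).trans (Finset.sum_le_sum fun j _ => ?_)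
          refine (Finset.abs_sum_le_sum_abs _ _).trans (Finset.sum_le_sum fun i _ => ?_)
          rw [abs_mul, abs_of_nonneg (sq_nonneg ((V * Uᵀ) j i))]
          refine mul_le_mul_of_nonneg_left ?_ (sq_nonneg _)
          refine abs_ite_log_remainder_le ha hδ ?_ ?_ ?_ ?_ ?_ ?_
          · linarith [hμ (hle_last j), hdown last]
          · linarith [hν (hle_last i)]
          · exact fun hj => by linarith [hμ (hlo_le j hj), hup lo]
          · exact fun h => by linarith [hν (hlo_le i h)]
          · exact fun hj h => by linarith [hμ (hlo_le j hj), hup lo, hν (hle_hi i h)]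
          · exact fun h hj => by linarith [hν (hlo_le i h), hdown hi, hμ (hle_hi j hj)]
      _ = C * ∑ j, ∑ i, (V * Uᵀ) j i ^ 2 * (μ j - ν i) ^ 2 := by
          simp only [Finset.mul_sum, mul_left_comm]
      _ = C * (H * Hᵀ).trace * t ^ 2 := by
          rw [sum_sq_overlap_mul_sq_eigenvalue_sub hU hV hUΘ hVM, htr]
          ring
  exact key.neg
end
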